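/- arXiv:1210.4710 — 2 statements merged into one kernel-verified Lean document; each statement's English description precedes it below -/
import Mathlib

section
/- Let Δ = 2j−1 with j ≥ 2 and let G be a simple graph with no isolated vertices satisfying ν(G) = j, Δ(G) = Δ, and |E(G)| = (2j−1)j + j − 1. Then G has exactly one vertex of degree 2j−2, all other vertices have degree 2j−1, and G is unique up to isomorphism: it is obtained from K_{2j} minus a perfect matching by joining a new vertex to 2j−1 of the vertices. -/
open scoped Classical

/-- `M` is a matching of `G`, given as a finite set of edges. -/
def IsMatchingFinset {V : Type*} (G : SimpleGraph V) (M : Finset (Sym2 V)) : Prop :=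
  (M : Set (Sym2 V)) ⊆ G.edgeSet ∧
    ∀ e ∈ M, ∀ f ∈ M, e ≠ f → ∀ v : V, ¬(v ∈ e ∧ v ∈ f)

/-- ν(G): the maximum size of a matching of `G`. -/
noncomputable def matchingNumber {V : Type*} (G : SimpleGraph V) : ℕ :=
  sSup {n | ∃ M : Finset (Sym2 V), IsMatchingFinset G M ∧ M.card = n}

/-- A proper edge coloring of `G` using colors `< n`. -/
def IsProperEdgeColoring {V : Type*} (G : SimpleGraph V) (n : ℕ) (c : Sym2 V → ℕ) : Prop :=
  (∀ e ∈ G.edgeSet, c e < n) ∧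
    ∀ e ∈ G.edgeSet, ∀ f ∈ G.edgeSet, e ≠ f → (∃ v : V, v ∈ e ∧ v ∈ f) → c e ≠ c f

/-- χ'(G): the edge chromatic index of `G`. -/
noncomputable def chromaticIndex {V : Type*} (G : SimpleGraph V) : ℕ :=
  sInf {n | ∃ c : Sym2 V → ℕ, IsProperEdgeColoring G n c}

/-- `G` is friendly-edge-colorable: its edge set is partitioned into maximum matchings. -/
noncomputable def Friendly {V : Type*} [Fintype V] (G : SimpleGraph V) : Prop :=
  ∃ P : Finset (Finset (Sym2 V)),
    (∀ M ∈ P, IsMatchingFinset G M ∧ M.card = matchingNumber G) ∧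
    (∀ e, e ∈ G.edgeFinset ↔ ∃ M ∈ P, e ∈ M) ∧
    ∀ M ∈ P, ∀ N ∈ P, M ≠ N → Disjoint M N

/-- The graph `G` with vertex `x` deleted. -/
def delVert {V : Type*} (G : SimpleGraph V) (x : V) : SimpleGraph {v : V // v ≠ x} :=
  G.induce {v : V | v ≠ x}

/-- `G` has a perfect matching. -/
def HasPerfectMatchingFinset {V : Type*} (G : SimpleGraph V) : Prop :=
  ∃ M : Finset (Sym2 V), IsMatchingFinset G M ∧ ∀ v : V, ∃ e ∈ M, v ∈ e

/-- `G` is factor-critical. -/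
def FactorCritical {V : Type*} (G : SimpleGraph V) : Prop :=
  G.Connected ∧ ∀ x : V, HasPerfectMatchingFinset (delVert G x)

/-- The graph `𝒞` for odd maximum degree `2j-1`: `K_{2j}` minus a perfect matching
(the matching pairs `2i` with `2i+1`), together with a new vertex (vertex `2*j`)
joined to the `2j-1` vertices `0, …, 2j-2`. -/
def oddExtremalGraph (j : ℕ) : SimpleGraph (Fin (2 * j + 1)) :=
  SimpleGraph.fromRel (fun a b =>
    (a.val < 2 * j ∧ b.val < 2 * j ∧ a.val / 2 ≠ b.val / 2) ∨
    (a.val = 2 * j ∧ b.val < 2 * j - 1))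


universe u

/-- `G` joined with a complete graph on `D` new vertices. -/
def joinG {V : Type*} (G : SimpleGraph V) (D : ℕ) : SimpleGraph (V ⊕ Fin D) where
  Adj a b := a ≠ b ∧ ∀ u v, a = Sum.inl u → b = Sum.inl v → G.Adj u v
  symm := ⟨fun a b h => ⟨h.1.symm, fun u v hu hv => (h.2 v u hv hu).symm⟩⟩
  loopless := ⟨fun a h => h.1 rfl⟩

lemma matching_card_le {V : Type*} [Fintype V] (G : SimpleGraph V) (M : Finset (Sym2 V))
    (hM : IsMatchingFinset G M) : M.card ≤ matchingNumber G := by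
  apply le_csSup
  · refine ⟨G.edgeFinset.card, ?_⟩
    rintro n ⟨N, hN, rfl⟩
    apply Finset.card_le_card
    intro e he
    simpa using hN.1 he
  · exact ⟨M, hM, rfl⟩

lemma pm_join {V : Type*} [Fintype V] (G : SimpleGraph V) (D : ℕ)
    (M : (joinG G D).Subgraph) (hM : M.IsPerfectMatching) :
    Fintype.card V ≤ 2 * matchingNumber G + D := by
  rw [SimpleGraph.Subgraph.isPerfectMatching_iff] at hM
  let N : Finset (Sym2 V) := G.edgeFinset.filter (fun e => e.map Sum.inl ∈ M.edgeSet)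
  have hN : IsMatchingFinset G N := by
    refine ⟨fun e he => by simp [N] at he; exact he.1, ?_⟩
    intro e he f hf hef v hv
    obtain ⟨a, rfl⟩ := Sym2.mem_iff_exists.1 hv.1
    obtain ⟨b, rfl⟩ := Sym2.mem_iff_exists.1 hv.2
    simp [N] at he hf
    have := (hM (Sum.inl v)).unique he.2 hf.2
    simp at this
    exact hef (by rw [this])
  have h1 := matching_card_le G N hN
  let C : Finset V := N.biUnion (fun e => Finset.univ.filter (fun v => v ∈ e))
  have hC : C.card ≤ N.card * 2 := by
    apply Finset.card_biUnion_le_card_mul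
    intro e he
    induction e with
    | _ a b =>
      have : (Finset.univ.filter (fun v => v ∈ s(a, b))) ⊆ {a, b} := by
        intro x; simp
      exact (Finset.card_le_card this).trans Finset.card_le_two
  have hU : (Cᶜ).card ≤ D := by
    have : ∀ v ∈ Cᶜ, ∃ i : Fin D, M.Adj (Sum.inl v) (Sum.inr i) := by
      intro v hv
      obtain ⟨w, hw, -⟩ := hM (Sum.inl v)
      rcases w with w | i
      · exfalso
        simp [C] at hv
        refine hv s(v, w) ?_ (by simp)
        simp only [N, Finset.mem_filter, SimpleGraph.mem_edgeFinset, SimpleGraph.mem_edgeSet]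
        exact ⟨(M.adj_sub hw).2 v w rfl rfl, hw⟩
      · exact ⟨i, hw⟩
    choose f hf using this
    have h2 := Finset.card_le_card_of_injOn (s := (Cᶜ).attach) (t := (Finset.univ : Finset (Fin D)))
      (fun v => f v.1 v.2) (by simp) (by
        intro a _ b _ hab
        have ha := hf a.1 a.2
        have hb := hf b.1 b.2
        simp only at hab
        rw [← hab] at hb
        have := (hM _).unique ha.symm hb.symm
        simp at this
        exact this)
    simpa using h2
  have := Finset.card_add_card_compl C
  omega

lemma berge {V : Type u} [Fintype V] (G : SimpleGraph V) (D : ℕ)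
    (hpar : Even (Fintype.card V + D))
    (hno : 2 * matchingNumber G + D < Fintype.card V) :
    ∃ (A : Finset V) (K : Type u) (_ : Fintype K) (c : {v // v ∉ A} → K),
      (∀ u v, G.Adj u.1 v.1 → c u = c v) ∧
      A.card + D < (Finset.univ.filter
        (fun k => Odd (Finset.univ.filter (fun v => c v = k)).card)).card := by
  have hn : ¬ ∃ M : (joinG G D).Subgraph, M.IsPerfectMatching := by
    rintro ⟨M, hM⟩
    have := pm_join G D M hM
    omega
  rw [SimpleGraph.tutte] at hn
  push Not at hn
  obtain ⟨U, hU⟩ := hn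
  unfold SimpleGraph.IsTutteViolator at hU
  have hadj : ∀ x y, x ∉ U → y ∉ U → (joinG G D).Adj x y →
      ((⊤ : (joinG G D).Subgraph).deleteVerts U).Adj x y := by
    intro x y hx hy h
    rw [SimpleGraph.Subgraph.deleteVerts_adj]
    simp [hx, hy, h]
  have hin : ∀ i, Sum.inr i ∈ U := by
    intro i
    by_contra hi
    have hsub : Subsingleton
        ((⊤ : (joinG G D).Subgraph).deleteVerts U).coe.ConnectedComponent := by
      have key : ∀ c : ((⊤ : (joinG G D).Subgraph).deleteVerts U).coe.ConnectedComponent,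
          c = SimpleGraph.connectedComponentMk _ ⟨Sum.inr i, by simpa using hi⟩ := by
        intro c
        induction c using SimpleGraph.ConnectedComponent.ind with
        | _ v =>
          obtain ⟨v, hv⟩ := v
          by_cases hvi : v = Sum.inr i
          · subst hvi; rfl
          · apply SimpleGraph.ConnectedComponent.connectedComponentMk_eq_of_adj
            rw [SimpleGraph.Subgraph.coe_adj]
            refine hadj _ _ (by simpa using hv) hi ⟨hvi, by simp⟩
      exact ⟨fun a b => (key a).trans (key b).symm⟩
    have h1 := Set.ncard_le_one_of_subsingleton
      ((⊤ : (joinG G D).Subgraph).deleteVerts U).coe.oddComponents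
    have h0 : U.ncard = 0 := by omega
    rw [Set.ncard_eq_zero] at h0
    have ho : Odd ((⊤ : (joinG G D).Subgraph).deleteVerts U).coe.oddComponents.ncard := by
      rw [show ((⊤ : (joinG G D).Subgraph).deleteVerts U).coe.oddComponents.ncard = 1 by omega]
      exact odd_one
    rw [SimpleGraph.odd_ncard_oddComponents] at ho
    subst h0
    simp at ho
    rw [← Nat.not_even_iff_odd] at ho
    exact ho hpar
  let A : Finset V := Finset.univ.filter (fun v => Sum.inl v ∈ U)
  have hA : ∀ v, v ∉ A → Sum.inl v ∉ U := by simp [A]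
  have hUc : U.ncard = A.card + D := by
    have : U = ((A.disjSum (Finset.univ : Finset (Fin D)) : Finset _) : Set (V ⊕ Fin D)) := by
      ext x
      rcases x with x | x
      · simp [A]
      · simp [hin]
    rw [this, Set.ncard_coe_finset, Finset.card_disjSum]
    simp
  let e : {v // v ∉ A} ≃ ((⊤ : (joinG G D).Subgraph).deleteVerts U).verts :=
    Equiv.ofBijective (fun v => ⟨Sum.inl v.1, by simpa using hA v.1 v.2⟩) (by
      constructor
      · intro a b h
        simpa [Subtype.ext_iff] using h
      · rintro ⟨x | x, hx⟩
        · exact ⟨⟨x, by simpa [A] using hx⟩, rfl⟩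
        · exact absurd (hin x) (by simpa using hx))
  refine ⟨A, ((⊤ : (joinG G D).Subgraph).deleteVerts U).coe.ConnectedComponent,
    Fintype.ofFinite _, fun v => SimpleGraph.connectedComponentMk _ (e v), ?_, ?_⟩
  · intro u v huv
    apply SimpleGraph.ConnectedComponent.connectedComponentMk_eq_of_adj
    rw [SimpleGraph.Subgraph.coe_adj]
    refine hadj _ _ (hA _ u.2) (hA _ v.2) ⟨?_, ?_⟩
    · intro h
      exact huv.ne (Sum.inl.inj h)
    · intro a b ha hb
      have ha' : u.1 = a := Sum.inl.inj ha
      have hb' : v.1 = b := Sum.inl.inj hb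
      rw [← ha', ← hb']; exact huv
  · rw [← hUc]
    refine lt_of_lt_of_eq hU ?_
    rw [← Set.ncard_coe_finset]
    refine congrArg Set.ncard ?_
    ext k
    simp only [Finset.coe_filter, Finset.mem_univ, true_and, Set.mem_ofPred_eq]
    have : k.supp = Set.image e {v | SimpleGraph.connectedComponentMk _ (e v) = k} := by
      ext x
      obtain ⟨y, rfl⟩ := e.surjective x
      simp
    rw [this, Set.ncard_image_of_injective _ e.injective, ← Set.ncard_coe_finset]
    simp

/-- counting over the fibres -/
lemma count_fib {W K : Type*} [Fintype W] [Fintype K] (c : W → K) (g : W → ℕ) (j a : ℕ)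
    (hg1 : ∀ w, g w ≤ 2 * j - 1)
    (hg2 : ∀ w, g w + 1 ≤ (Finset.univ.filter (fun v => c v = c w)).card)
    (hq : Fintype.card W + 2 * a ≤ 2 * j + 1 + (Finset.univ.filter
        (fun k => Odd (Finset.univ.filter (fun v => c v = k)).card)).card) :
    (∑ w, g w) + 2 * (a * (2 * j - 1)) ≤ 2 * (j * (2 * j - 1)) ∨
    (a = 0 ∧ ∃ w₀, (Finset.univ.filter (fun v => c v = c w₀)).card = 2 * j + 1 ∧
      ∀ w, c w ≠ c w₀ → g w = 0) := by
  set s : K → ℕ := fun k => (Finset.univ.filter (fun v => c v = k)).card with hs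
  have hW : Fintype.card W = ∑ k, s k := by
    rw [← Finset.card_univ]
    exact Finset.card_eq_sum_card_fiberwise (fun x _ => by simp)
  have hq2 : (Finset.univ.filter (fun k => Odd (s k))).card = ∑ k, s k % 2 := by
    rw [Finset.card_filter]
    apply Finset.sum_congr rfl
    intro k _
    split_ifs with h
    · exact (Nat.odd_iff.1 h).symm
    · rw [Nat.not_odd_iff_even] at h; exact (Nat.even_iff.1 h).symm
  have hsum : (∑ k, s k) = 2 * (∑ k, s k / 2) + ∑ k, s k % 2 := by
    rw [Finset.mul_sum, ← Finset.sum_add_distrib]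
    exact Finset.sum_congr rfl (fun k _ => by omega)
  have hha : (∑ k, s k / 2) + a ≤ j := by
    have : Fintype.card W + 2 * a ≤ 2 * j + 1 +
      (Finset.univ.filter (fun k => Odd (s k))).card := hq
    omega
  have hg : ∑ w, g w = ∑ k, ∑ w ∈ Finset.univ.filter (fun v => c v = k), g w :=
    (Finset.sum_fiberwise _ _ _).symm
  by_cases hbig : ∃ w₀, 2 * j + 1 ≤ s (c w₀)
  · right
    obtain ⟨w₀, hw₀⟩ := hbig
    have h1 : s (c w₀) / 2 + ∑ k ∈ Finset.univ.erase (c w₀), s k / 2 = ∑ k, s k / 2 :=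
      Finset.add_sum_erase _ (fun k => s k / 2) (Finset.mem_univ _)
    refine ⟨by omega, w₀, ?_, ?_⟩
    · change s (c w₀) = _
      omega
    · intro w hw
      have h2 : s (c w) / 2 ≤ ∑ k ∈ Finset.univ.erase (c w₀), s k / 2 :=
        Finset.single_le_sum (f := fun k => s k / 2) (fun _ _ => Nat.zero_le _) (by simp [hw])
      have := hg2 w
      change g w + 1 ≤ s (c w) at this
      omega
  · left
    push Not at hbig
    have hk : ∀ k, ∑ w ∈ Finset.univ.filter (fun v => c v = k), g w
        ≤ 2 * (s k / 2) * (2 * j - 1) := by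
      intro k
      by_cases h0 : s k = 0
      · have : Finset.univ.filter (fun v => c v = k) = ∅ := Finset.card_eq_zero.1 h0
        rw [this]; simp
      · obtain ⟨w, hw⟩ := Finset.card_pos.1 (Nat.pos_of_ne_zero h0)
        simp at hw
        have hb := hbig w
        rw [hw] at hb
        rcases Nat.even_or_odd' (s k) with ⟨m, hm | hm⟩
        · refine (Finset.sum_le_card_nsmul _ _ (2 * j - 1) (fun x _ => hg1 x)).trans ?_
          change s k * _ ≤ _
          rw [show 2 * (s k / 2) = s k by omega]
        · refine (Finset.sum_le_card_nsmul _ _ (2 * m) (fun x hx => ?_)).trans ?_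
          · simp at hx
            have := hg2 x
            rw [hx] at this
            change _ ≤ s k at this
            omega
          · change s k * _ ≤ _
            rw [show 2 * (s k / 2) = 2 * m by omega, mul_comm]
            exact Nat.mul_le_mul_left _ (by omega)
    calc _ ≤ (∑ k, 2 * (s k / 2) * (2 * j - 1)) + 2 * (a * (2 * j - 1)) := by
          rw [hg]; exact Nat.add_le_add_right (Finset.sum_le_sum (fun k _ => hk k)) _
      _ = 2 * (((∑ k, s k / 2) + a) * (2 * j - 1)) := by
          rw [← Finset.sum_mul, ← Finset.mul_sum]; ring
      _ ≤ _ := by gcongr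

lemma card_eq {V : Type u} [Fintype V] (G : SimpleGraph V) (j : ℕ) (hj : 2 ≤ j)
    (hiso : ∀ v : V, 0 < G.degree v)
    (hν : matchingNumber G = j)
    (hdeg : ∀ v, G.degree v ≤ 2 * j - 1)
    (hS : ∑ v, G.degree v = 2 * (j * (2 * j - 1)) + 2 * (j - 1)) :
    Fintype.card V = 2 * j + 1 := by
  have hlow : 2 * j < Fintype.card V := by
    by_contra h
    have h1 : ∑ v, G.degree v ≤ Fintype.card V * (2 * j - 1) := by
      simpa using Finset.sum_le_card_nsmul Finset.univ (fun v => G.degree v) (2 * j - 1)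
        (fun v _ => hdeg v)
    have h2 : Fintype.card V * (2 * j - 1) ≤ (2 * j) * (2 * j - 1) :=
      Nat.mul_le_mul_right _ (by omega)
    rw [mul_assoc] at h2
    omega
  by_contra hne
  obtain ⟨D, hD⟩ : ∃ D, Fintype.card V = 2 * j + 2 + D := ⟨Fintype.card V - (2 * j + 2), by omega⟩
  obtain ⟨A, K, _, c, hc, hq⟩ := berge G D ⟨j + 1 + D, by omega⟩ (by omega)
  have hdf : ∀ v, G.degree v = (Finset.univ.filter (fun u => G.Adj v u)).card := by
    intro v
    rw [← SimpleGraph.card_neighborFinset_eq_degree, SimpleGraph.neighborFinset_eq_filter]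
  have hWc : A.card + Fintype.card {v // v ∉ A} = Fintype.card V := by
    have := Fintype.card_subtype_compl (fun v => v ∈ A)
    have h2 := Finset.card_le_univ A
    simp at this
    simp
    omega
  let g : {v // v ∉ A} → ℕ := fun w => (Finset.univ.filter (fun u : {v // v ∉ A} => G.Adj w.1 u.1)).card
  have hsub : ∀ v : V, (Finset.univ.filter (fun u : {v // v ∉ A} => G.Adj v u.1)).card
      = (Finset.univ.filter (fun u => G.Adj v u ∧ u ∉ A)).card := by
    intro v
    rw [← Finset.card_map (Function.Embedding.subtype _)]
    congr 1
    ext u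
    simp
  have hsplit : ∀ v : V, G.degree v = (A.filter (fun u => G.Adj v u)).card
      + (Finset.univ.filter (fun u : {v // v ∉ A} => G.Adj v u.1)).card := by
    intro v
    rw [hsub, hdf, ← Finset.card_filter_add_card_filter_not (s := Finset.univ.filter (fun u => G.Adj v u)) (fun u => u ∈ A)]
    congr 2
    · ext u; simp [and_comm]
    · ext u; simp
  have hg1 : ∀ w, g w ≤ 2 * j - 1 := by
    intro w
    have := hsplit w.1
    have := hdeg w.1
    simp only [g]
    omega
  have hg2 : ∀ w, g w + 1 ≤ (Finset.univ.filter (fun v => c v = c w)).card := by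
    intro w
    have hnot : w ∉ Finset.univ.filter (fun u : {v // v ∉ A} => G.Adj w.1 u.1) := by simp
    rw [← Finset.card_insert_of_notMem hnot]
    apply Finset.card_le_card
    intro u hu
    simp only [Finset.mem_insert, Finset.mem_filter, Finset.mem_univ, true_and] at hu ⊢
    rcases hu with rfl | hu
    · rfl
    · exact (hc _ _ hu).symm
  have hcross : ∑ w : {v // v ∉ A}, (A.filter (fun u => G.Adj w.1 u)).card
      ≤ A.card * (2 * j - 1) := by
    calc _ = ∑ u ∈ A, (Finset.univ.filter (fun w : {v // v ∉ A} => G.Adj u w.1)).card := by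
          simp only [Finset.card_filter]
          rw [Finset.sum_comm]
          simp only [G.adj_comm]
      _ ≤ ∑ u ∈ A, (2 * j - 1) := by
          apply Finset.sum_le_sum
          intro u _
          have := hsplit u
          have := hdeg u
          omega
      _ = _ := by simp
  have htot : ∑ v, G.degree v = ∑ v ∈ A, G.degree v + ∑ w : {v // v ∉ A}, G.degree w.1 := by
    rw [← Finset.sum_add_sum_compl A]
    congr 1
    exact Finset.sum_subtype _ (by simp) _
  have hAs : ∑ v ∈ A, G.degree v ≤ A.card * (2 * j - 1) := by
    simpa using Finset.sum_le_card_nsmul A (fun v => G.degree v) (2 * j - 1)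
        (fun v _ => hdeg v)
  have hWs : ∑ w : {v // v ∉ A}, G.degree w.1 =
      ∑ w : {v // v ∉ A}, (A.filter (fun u => G.Adj w.1 u)).card + ∑ w, g w := by
    rw [← Finset.sum_add_distrib]
    exact Finset.sum_congr rfl (fun w _ => hsplit w.1)
  rcases count_fib c g j A.card hg1 hg2 (by omega) with h | ⟨h0, w₀, hw₀, hz⟩
  · omega
  · have : ∃ w, c w ≠ c w₀ := by
      by_contra hcon
      push Not at hcon
      have : Finset.univ.filter (fun v => c v = c w₀) = Finset.univ := by
        ext v; simp [hcon v]
      rw [this, Finset.card_univ] at hw₀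
      omega
    obtain ⟨w, hw⟩ := this
    have h1 := hz w hw
    have h2 := hsplit w.1
    have h3 := hiso w.1
    have h4 : (A.filter (fun u => G.Adj w.1 u)).card = 0 := by
      rw [Finset.card_eq_zero] at h0
      simp [h0]
    simp only [g] at h1
    omega

lemma pairing {V : Type u} (σ : V → V) (m : ℕ) : ∀ (S : Finset V), S.card = 2 * m →
    (∀ v ∈ S, σ v ∈ S ∧ σ (σ v) = v ∧ σ v ≠ v) →
    ∃ f : V → ℕ, (∀ v ∈ S, f v < 2 * m) ∧ (∀ u ∈ S, ∀ v ∈ S, f u = f v → u = v) ∧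
      ∀ v ∈ S, f (σ v) / 2 = f v / 2 := by
  induction m with
  | zero =>
    intro S hS _
    have : S = ∅ := by simpa using hS
    subst this
    exact ⟨fun _ => 0, by simp⟩
  | succ m ih =>
    intro S hS hσ
    obtain ⟨r, hr⟩ : S.Nonempty := Finset.card_pos.1 (by omega)
    have hr1 := hσ r hr
    obtain ⟨f, h1, h2, h3⟩ := ih ((S.erase r).erase (σ r)) (by
      rw [Finset.card_erase_of_mem (by simp [hr1]), Finset.card_erase_of_mem hr]; omega) (by
      intro v hv
      simp only [Finset.mem_erase] at hv ⊢
      have := hσ v hv.2.2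
      grind)
    simp only [Finset.mem_erase] at h1 h2 h3
    refine ⟨fun v => if v = r then 2 * m else if v = σ r then 2 * m + 1 else f v, ?_, ?_, ?_⟩
    · intro v hv
      have := h1 v
      grind
    · intro u hu v hv
      have := h1 v
      have := h1 u
      have := h2 u
      grind
    · intro v hv
      have := h3 v
      have := hσ v hv
      by_cases hvr : v = r
      · subst hvr
        simp [hr1]; omega
      · by_cases hvs : v = σ r
        · subst hvs
          simp [hr1]; omega
        · have e1 : σ v ≠ r := by grind
          have e2 : σ v ≠ σ r := by grind
          simp [hvr, hvs, e1, e2]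
          grind

lemma degs {V : Type u} [Fintype V] (d : V → ℕ) (k : ℕ) (hd : ∀ v, d v ≤ k)
    (hS : ∑ v, d v + 1 = Fintype.card V * k) :
    ∃ v₀, d v₀ + 1 = k ∧ ∀ v, v ≠ v₀ → d v = k := by
  have h1 : ∑ v, (k - d v) + ∑ v, d v = Fintype.card V * k := by
    rw [← Finset.sum_add_distrib]
    simp [Nat.sub_add_cancel (hd _)]
  have h2 : ∑ v, (k - d v) = 1 := by omega
  obtain ⟨v₀, -, h⟩ := Finset.exists_ne_zero_of_sum_ne_zero (by rw [h2]; simp : ∑ v, (k - d v) ≠ 0)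
  have h3 := Finset.add_sum_erase Finset.univ (fun v => k - d v) (Finset.mem_univ v₀)
  simp only [h2] at h3
  refine ⟨v₀, by omega, fun v hv => ?_⟩
  have h4 : k - d v ≤ ∑ k_1 ∈ Finset.univ.erase v₀, (k - d k_1) :=
    Finset.single_le_sum (f := fun v => k - d v) (fun _ _ => Nat.zero_le _) (by simp [hv])
  have := hd v
  omega

lemma iso_ext {V : Type u} [Fintype V] (G : SimpleGraph V) (j : ℕ) (hj : 2 ≤ j)
    (hcard : Fintype.card V = 2 * j + 1) (v₀ : V) (h0 : G.degree v₀ = 2 * j - 2)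
    (hr : ∀ v, v ≠ v₀ → G.degree v = 2 * j - 1) : Nonempty (G ≃g oddExtremalGraph j) := by
  have hco : ∀ v, Gᶜ.degree v + G.degree v = 2 * j := by
    intro v
    have := G.degree_compl v
    have := G.degree_lt_card_verts v
    omega
  have hcd : ∀ v, Gᶜ.degree v = (Finset.univ.filter (fun u => Gᶜ.Adj v u)).card := by
    intro v
    rw [← SimpleGraph.card_neighborFinset_eq_degree, SimpleGraph.neighborFinset_eq_filter]
  have hs : ∀ v, ∃ w, v ≠ v₀ → ∀ u, (u ≠ v ∧ ¬ G.Adj v u) ↔ u = w := by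
    intro v
    by_cases hv : v = v₀
    · exact ⟨v, fun h => absurd hv h⟩
    have h1 : (Finset.univ.filter (fun u => Gᶜ.Adj v u)).card = 1 := by
      have := hco v
      have := hr v hv
      rw [← hcd]; omega
    obtain ⟨w, hw⟩ := Finset.card_eq_one.1 h1
    refine ⟨w, fun _ u => ?_⟩
    have := congrArg (fun S => u ∈ S) hw
    simp only [Finset.mem_filter, Finset.mem_univ, true_and, Finset.mem_singleton,
      Finset.mem_insert, SimpleGraph.compl_adj, eq_iff_iff] at this
    rw [← this, ne_comm]
  choose σ hσ using hs
  obtain ⟨x, y, hxy, hw⟩ : ∃ x y, x ≠ y ∧ ∀ u, (u ≠ v₀ ∧ ¬ G.Adj v₀ u) ↔ (u = x ∨ u = y) := by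
    have h1 : (Finset.univ.filter (fun u => Gᶜ.Adj v₀ u)).card = 2 := by
      have := hco v₀
      rw [← hcd]; omega
    obtain ⟨x, y, hxy, hw⟩ := Finset.card_eq_two.1 h1
    refine ⟨x, y, hxy, fun u => ?_⟩
    have := congrArg (fun S => u ∈ S) hw
    simp only [Finset.mem_filter, Finset.mem_univ, true_and, Finset.mem_singleton,
      Finset.mem_insert, SimpleGraph.compl_adj, eq_iff_iff] at this
    rw [← this, ne_comm]
  have hx := (hw x).2 (Or.inl rfl)
  have hy := (hw y).2 (Or.inr rfl)
  have hsx : v₀ = σ x := (hσ x hx.1 v₀).1 ⟨hx.1.symm, fun h => hx.2 h.symm⟩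
  have hsy : v₀ = σ y := (hσ y hy.1 v₀).1 ⟨hy.1.symm, fun h => hy.2 h.symm⟩
  let S : Finset V := ((Finset.univ.erase v₀).erase x).erase y
  have hmS : ∀ v, v ∈ S ↔ v ≠ y ∧ v ≠ x ∧ v ≠ v₀ := by simp [S]
  have hSc : S.card = 2 * (j - 1) := by
    rw [Finset.card_erase_of_mem (by simp [hxy.symm, hy.1]), Finset.card_erase_of_mem (by simp [hx.1]),
      Finset.card_erase_of_mem (by simp), Finset.card_univ]
    omega
  have hσS : ∀ v ∈ S, σ v ∈ S ∧ σ (σ v) = v ∧ σ v ≠ v := by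
    intro v hv
    rw [hmS] at hv
    have h1 := (hσ v hv.2.2 (σ v)).2 rfl
    have h2 : ¬ G.Adj (σ v) v := fun h => h1.2 h.symm
    have h3 : σ v ≠ v₀ := by
      intro h
      rw [h] at h2
      have := (hw v).1 ⟨hv.2.2, h2⟩
      tauto
    have h4 : v = σ (σ v) := (hσ (σ v) h3 v).1 ⟨h1.1.symm, h2⟩
    refine ⟨(hmS _).2 ⟨?_, ?_, h3⟩, h4.symm, h1.1⟩
    · intro h; rw [h, ← hsy] at h4; exact hv.2.2 h4
    · intro h; rw [h, ← hsx] at h4; exact hv.2.2 h4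
  obtain ⟨f, f1, f2, f3⟩ := pairing σ (j - 1) S hSc hσS
  let F : V → ℕ := fun v => if v = x then 2 * j else if v = v₀ then 2 * j - 1 else
    if v = y then 2 * j - 2 else f v
  have Fx : F x = 2 * j := by simp [F]
  have F0 : F v₀ = 2 * j - 1 := by simp [F, hx.1.symm]
  have Fy : F y = 2 * j - 2 := by simp [F, hxy.symm, hy.1]
  have FS : ∀ v ∈ S, F v = f v := by
    intro v hv
    rw [hmS] at hv
    simp [F, hv]
  have cases4 : ∀ v, v = x ∨ v = v₀ ∨ v = y ∨ v ∈ S := by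
    intro v; rw [hmS]; tauto
  have full : ∀ v, (v = x ∧ F v = 2 * j) ∨ (v = v₀ ∧ F v = 2 * j - 1) ∨
      (v = y ∧ F v = 2 * j - 2) ∨ (v ∈ S ∧ F v = f v ∧ f v < 2 * (j - 1)) := by
    intro v
    rcases cases4 v with rfl | rfl | rfl | h
    · exact Or.inl ⟨rfl, Fx⟩
    · exact Or.inr (Or.inl ⟨rfl, F0⟩)
    · exact Or.inr (Or.inr (Or.inl ⟨rfl, Fy⟩))
    · exact Or.inr (Or.inr (Or.inr ⟨h, FS v h, f1 v h⟩))
  have Flt : ∀ v, F v < 2 * j + 1 := by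
    intro v
    rcases cases4 v with rfl | rfl | rfl | h
    · omega
    · omega
    · omega
    · rw [FS v h]; have := f1 v h; omega
  have Finj : ∀ u v, F u = F v → u = v := by
    intro u v huv
    rcases full u with ⟨h, h1⟩ | ⟨h, h1⟩ | ⟨h, h1⟩ | ⟨h, h1, h2⟩ <;>
    rcases full v with ⟨h', h1'⟩ | ⟨h', h1'⟩ | ⟨h', h1'⟩ | ⟨h', h1', h2'⟩ <;>
      first
      | exact h.trans h'.symm
      | (exfalso; omega)
      | exact f2 _ h _ h' (by omega)
  have hbij : Function.Bijective (fun v => (⟨F v, Flt v⟩ : Fin (2 * j + 1))) := by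
    rw [Fintype.bijective_iff_injective_and_card]
    refine ⟨fun u v h => Finj u v (by simpa using h), by simp [hcard]⟩
  refine ⟨⟨Equiv.ofBijective _ hbij, ?_⟩⟩
  intro u v
  simp only [Equiv.ofBijective_apply, oddExtremalGraph, SimpleGraph.fromRel_adj, ne_eq, Fin.mk.injEq]
  have Fne : F u = F v ↔ u = v := ⟨Finj u v, fun h => by rw [h]⟩
  rw [Fne]
  -- adjacency facts
  have ax : ∀ v, G.Adj x v ↔ v ≠ x ∧ v ≠ v₀ := by
    intro v
    have := hσ x hx.1 v
    rw [← hsx] at this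
    have h2 : v = x → ¬ G.Adj x v := by rintro rfl; simp
    tauto
  have ay : ∀ v, G.Adj y v ↔ v ≠ y ∧ v ≠ v₀ := by
    intro v
    have := hσ y hy.1 v
    rw [← hsy] at this
    have h2 : v = y → ¬ G.Adj y v := by rintro rfl; simp
    tauto
  have a0 : ∀ v, G.Adj v₀ v ↔ v ≠ x ∧ v ≠ y ∧ v ≠ v₀ := by
    intro v
    have := hw v
    have h2 : v = v₀ → ¬ G.Adj v₀ v := by rintro rfl; simp
    tauto
  have aS : ∀ u ∈ S, ∀ v ∈ S, G.Adj u v ↔ f u / 2 ≠ f v / 2 := by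
    intro u hu v hv
    have h1 := hσ u ((hmS u).1 hu).2.2 v
    by_cases huv : u = v
    · subst huv; simp
    · have h3 : v = σ u ↔ f u / 2 = f v / 2 := by
        constructor
        · rintro rfl; exact (f3 u hu).symm
        · intro h
          by_contra hne
          have e1 := f3 u hu
          have e2 := fun h => f2 u hu v hv h
          have e3 := fun h => hne (f2 v hv (σ u) (hσS u hu).1 h)
          have e4 := fun h => (hσS u hu).2.2 (f2 (σ u) (hσS u hu).1 u hu h)
          have e5 : f u ≠ f v := fun h => huv (e2 h)
          have e6 : f v ≠ f (σ u) := e3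
          have e7 : f (σ u) ≠ f u := e4
          omega
      have : v ≠ u := fun h => huv h.symm
      tauto
  have hne0 : ∀ v ∈ S, v ≠ y ∧ v ≠ x ∧ v ≠ v₀ := fun v hv => (hmS v).1 hv
  have haS := aS u
  have hu0 := hne0 u
  have hv0 := hne0 v
  have axu := ax u
  have axv := ax v
  have ayu := ay u
  have ayv := ay v
  have a0u := a0 u
  have a0v := a0 v
  have hcomm := G.adj_comm u v
  have Fuu := full u
  have Fvv := full v
  have hx1 := hx.1
  have hy1 := hy.1
  clear_value F S
  clear hw hσ hσS f1 f2 f3 FS cases4 full Flt Finj ax ay a0 aS hne0 hmS hbij hr hco hcd hSc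
  rcases Fuu with ⟨h, h1⟩ | ⟨h, h1⟩ | ⟨h, h1⟩ | ⟨h, h1, h2⟩ <;>
    rcases Fvv with ⟨h', h1'⟩ | ⟨h', h1'⟩ | ⟨h', h1'⟩ | ⟨h', h1', h2'⟩ <;>
    grind

theorem stmt_5 {V : Type*} [Fintype V] (G : SimpleGraph V) (j : ℕ) (hj : 2 ≤ j)
    (hiso : ∀ v : V, 0 < G.degree v)
    (hν : matchingNumber G = j)
    (hmax : G.maxDegree = 2 * j - 1)
    (hE : G.edgeFinset.card = (2 * j - 1) * j + j - 1) :
    (∃ v₀ : V, G.degree v₀ = 2 * j - 2 ∧ ∀ v : V, v ≠ v₀ → G.degree v = 2 * j - 1) ∧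
    Nonempty (G ≃g oddExtremalGraph j) := by
  have hdeg : ∀ v, G.degree v ≤ 2 * j - 1 := fun v => hmax ▸ G.degree_le_maxDegree v
  have hsum := G.sum_degrees_eq_twice_card_edges
  have hS : ∑ v, G.degree v = 2 * (j * (2 * j - 1)) + 2 * (j - 1) := by
    rw [mul_comm] at hE
    rw [hsum, hE]
    omega
  have hcard := card_eq G j hj hiso hν hdeg hS
  obtain ⟨v₀, h0, hr⟩ := degs (fun v => G.degree v) (2 * j - 1) hdeg (by
    rw [hS, hcard, add_mul, mul_assoc]
    omega)
  have h0' : G.degree v₀ = 2 * j - 2 := by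
    omega
  exact ⟨⟨v₀, h0', hr⟩, iso_ext G j hj hcard v₀ h0' hr⟩
end

section
/- If G is a friendly-edge-colorable simple graph, then every non-trivial connected component C of G is friendly-edge-colorable and satisfies χ'(C) = χ'(G). -/
open scoped Classical

theorem fr_card_le {V : Type*} [Fintype V] {G : SimpleGraph V} {M : Finset (Sym2 V)}
    (h : IsMatchingFinset G M) : M.card ≤ matchingNumber G := by
  refine le_csSup ⟨Fintype.card (Sym2 V), ?_⟩ ⟨M, h, rfl⟩
  rintro n ⟨M, -, rfl⟩
  exact Finset.card_le_univ M

theorem fr_num_le {V : Type*} {G : SimpleGraph V} {k : ℕ}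
    (h : ∀ M : Finset (Sym2 V), IsMatchingFinset G M → M.card ≤ k) : matchingNumber G ≤ k := by
  refine csSup_le ⟨0, ∅, ⟨by simp, by simp⟩, rfl⟩ ?_
  rintro n ⟨M, hM, rfl⟩
  exact h M hM

theorem fr_pos {V : Type*} [Fintype V] {G : SimpleGraph V} (h : G.edgeSet.Nonempty) :
    0 < matchingNumber G := by
  obtain ⟨e, he⟩ := h
  have : IsMatchingFinset G {e} := by
    refine ⟨by simpa using he, ?_⟩
    intro a ha b hb hab
    simp only [Finset.mem_singleton] at ha hb
    exact absurd (ha.trans hb.symm) hab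
  have := fr_card_le this
  rw [Finset.card_singleton] at this
  exact this

theorem fr_chrom {V : Type*} [Fintype V] {G : SimpleGraph V} (h : G.edgeSet.Nonempty)
    (P : Finset (Finset (Sym2 V)))
    (h1 : ∀ M ∈ P, IsMatchingFinset G M ∧ M.card = matchingNumber G)
    (h2 : ∀ e, e ∈ G.edgeSet ↔ ∃ M ∈ P, e ∈ M)
    (h3 : ∀ M ∈ P, ∀ N ∈ P, M ≠ N → Disjoint M N) : chromaticIndex G = P.card := by
  have hmem : ∃ c : Sym2 V → ℕ, IsProperEdgeColoring G P.card c := by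
    have h2' : ∀ e : Sym2 V, ∃ i : ℕ, e ∈ G.edgeSet →
        ∃ j : Fin P.card, j.val = i ∧ e ∈ (P.equivFin.symm j).val := by
      intro e
      by_cases he : e ∈ G.edgeSet
      · obtain ⟨M, hM, heM⟩ := (h2 e).1 he
        exact ⟨P.equivFin ⟨M, hM⟩, fun _ => ⟨_, rfl, by simpa using heM⟩⟩
      · exact ⟨0, fun h => absurd h he⟩
    choose c hc using h2'
    refine ⟨c, ?_, ?_⟩
    · intro e he
      obtain ⟨j, hj, -⟩ := hc e he
      rw [← hj]; exact j.2
    · rintro e he f hf hef ⟨v, hv⟩ hcc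
      obtain ⟨j, hj, hje⟩ := hc e he
      obtain ⟨k, hk, hkf⟩ := hc f hf
      have : j = k := Fin.ext (by omega)
      subst this
      exact (h1 _ (P.equivFin.symm j).2).1.2 e hje f hkf hef v hv
  apply le_antisymm
  · exact Nat.sInf_le hmem
  · refine le_csInf ⟨_, hmem⟩ ?_
    rintro n ⟨c, hc1, hc2⟩
    have hE : G.edgeFinset = P.biUnion (fun M => M) := by
      ext e
      simp only [SimpleGraph.mem_edgeFinset, Finset.mem_biUnion]
      exact h2 e
    have hcard : G.edgeFinset.card = P.card * matchingNumber G := by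
      rw [hE, Finset.card_biUnion (fun M hM N hN hMN => h3 M hM N hN hMN)]
      exact Finset.sum_const_nat fun M hM => (h1 M hM).2
    have hle : G.edgeFinset.card ≤ matchingNumber G * (Finset.range n).card := by
      refine Finset.card_le_mul_card_image_of_maps_to (f := c) ?_ _ ?_
      · intro e he
        simpa using hc1 e (by simpa using he)
      · intro i _
        apply fr_card_le
        refine ⟨?_, ?_⟩
        · intro e he
          simp at he
          exact he.1
        · intro e he f hf hef v hv
          simp at he hf
          exact hc2 e he.1 f hf.1 hef ⟨v, hv⟩ (he.2.trans hf.2.symm)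
    rw [hcard, Finset.card_range, mul_comm] at hle
    exact Nat.le_of_mul_le_mul_left hle (fr_pos h)

theorem fr_range {V : Type*} {G : SimpleGraph V} (c : G.ConnectedComponent) {e : Sym2 V}
    (he : e ∈ G.edgeSet) {v : V} (hv : v ∈ e) (hc : v ∈ c.supp) :
    ∃ f : Sym2 c.supp, f.map Subtype.val = e := by
  induction e using Sym2.ind with
  | _ a b =>
    rw [SimpleGraph.mem_edgeSet] at he
    have hab := SimpleGraph.ConnectedComponent.sound he.reachable
    have hh : a ∈ c.supp ∧ b ∈ c.supp := by
      simp only [SimpleGraph.ConnectedComponent.mem_supp_iff] at hc ⊢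
      rcases Sym2.mem_iff.1 hv with rfl | rfl
      · exact ⟨hc, by rw [← hc]; exact hab.symm⟩
      · exact ⟨by rw [← hc]; exact hab, hc⟩
    exact ⟨s(⟨a, hh.1⟩, ⟨b, hh.2⟩), rfl⟩

theorem fr_edge {V : Type*} {G : SimpleGraph V} (s : Set V) (e : Sym2 s) :
    e ∈ (G.induce s).edgeSet ↔ e.map Subtype.val ∈ G.edgeSet := by
  induction e using Sym2.ind with
  | _ a b => simp

theorem stmt_16 {V : Type*} [Fintype V] (G : SimpleGraph V) (hG : Friendly G) :
    ∀ c : G.ConnectedComponent, (G.induce c.supp).edgeFinset.Nonempty →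
      Friendly (G.induce c.supp) ∧ chromaticIndex (G.induce c.supp) = chromaticIndex G := by
  intro c hne
  have hne' : (G.induce c.supp).edgeSet.Nonempty := by
    obtain ⟨e, he⟩ := hne
    exact ⟨e, by simpa only [SimpleGraph.mem_edgeFinset] using he⟩
  have hneG : G.edgeSet.Nonempty := by
    obtain ⟨e, he⟩ := hne'
    exact ⟨_, (fr_edge _ e).1 he⟩
  obtain ⟨P, h1, h2, h3⟩ := hG
  simp only [SimpleGraph.mem_edgeFinset] at h2
  have hinj : Function.Injective (Sym2.map (Subtype.val : c.supp → V)) :=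
    Sym2.map.injective Subtype.val_injective
  let r : Finset (Sym2 V) → Finset (Sym2 c.supp) := fun M =>
    Finset.univ.filter fun e => e.map Subtype.val ∈ M
  have hr : ∀ M e, e ∈ r M ↔ e.map Subtype.val ∈ M := fun M e => by simp [r]
  have hrm : ∀ M ∈ P, IsMatchingFinset (G.induce c.supp) (r M) := by
    intro M hM
    refine ⟨?_, ?_⟩
    · intro e he
      exact (fr_edge _ e).2 ((h1 M hM).1.1 ((hr M e).1 he))
    · rintro e he f hf hef v ⟨hve, hvf⟩
      exact (h1 M hM).1.2 _ ((hr M e).1 he) _ ((hr M f).1 hf) (fun h => hef (hinj h)) v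
        ⟨Sym2.mem_map.2 ⟨v, hve, rfl⟩, Sym2.mem_map.2 ⟨v, hvf, rfl⟩⟩
  have hrc : ∀ M ∈ P, (r M).card = matchingNumber (G.induce c.supp) := by
    intro M hM
    apply le_antisymm (fr_card_le (hrm M hM))
    apply fr_num_le
    intro N hN
    obtain ⟨⟨hMe, hMm⟩, hMc⟩ := h1 M hM
    let R : Finset (Sym2 V) := M.filter fun e => ¬ ∃ f : Sym2 c.supp, f.map Subtype.val = e
    have key : ∀ e ∈ R, ∀ f ∈ N.image (Sym2.map Subtype.val), ∀ v, v ∈ e → v ∈ f → False := by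
      intro e he f hf v hve hvf
      simp only [R, Finset.mem_filter] at he
      simp only [Finset.mem_image] at hf
      obtain ⟨g, hg, rfl⟩ := hf
      obtain ⟨w, hw, rfl⟩ := Sym2.mem_map.1 hvf
      exact he.2 (fr_range c (hMe he.1) hve w.2)
    have hdis : Disjoint R (N.image (Sym2.map Subtype.val)) := by
      rw [Finset.disjoint_left]
      intro e he he'
      induction e using Sym2.ind with
      | _ a b => exact key _ he _ he' a (by simp) (by simp)
    have hmat : IsMatchingFinset G (R ∪ N.image (Sym2.map Subtype.val)) := by
      refine ⟨?_, ?_⟩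
      · intro e he
        simp only [Finset.coe_union, Set.mem_union, Finset.mem_coe] at he
        rcases he with he | he
        · exact hMe (Finset.mem_filter.1 he).1
        · obtain ⟨g, hg, rfl⟩ := Finset.mem_image.1 he
          exact (fr_edge _ g).1 (hN.1 hg)
      · rintro e he f hf hef v ⟨hve, hvf⟩
        rcases Finset.mem_union.1 he with he | he <;> rcases Finset.mem_union.1 hf with hf | hf
        · exact hMm e (Finset.mem_filter.1 he).1 f (Finset.mem_filter.1 hf).1 hef v ⟨hve, hvf⟩
        · exact key e he f hf v hve hvf
        · exact key f hf e he v hvf hve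
        · obtain ⟨g, hg, rfl⟩ := Finset.mem_image.1 he
          obtain ⟨g', hg', rfl⟩ := Finset.mem_image.1 hf
          obtain ⟨w, hw, rfl⟩ := Sym2.mem_map.1 hve
          obtain ⟨w', hw', hww⟩ := Sym2.mem_map.1 hvf
          have := Subtype.ext hww
          subst this
          exact hN.2 g hg g' hg' (fun h => hef (by rw [h])) w' ⟨hw, hw'⟩
    have hle := fr_card_le hmat
    rw [Finset.card_union_of_disjoint hdis, Finset.card_image_of_injective _ hinj, ← hMc] at hle
    have hsplit : M.card ≤ (r M).card + R.card := by
      rw [← Finset.card_image_of_injective (r M) hinj]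
      refine le_trans (Finset.card_le_card ?_) (Finset.card_union_le _ _)
      intro e he
      by_cases h : ∃ f : Sym2 c.supp, f.map Subtype.val = e
      · obtain ⟨f, rfl⟩ := h
        exact Finset.mem_union_left _ (Finset.mem_image_of_mem _ ((hr M f).2 he))
      · exact Finset.mem_union_right _ (Finset.mem_filter.2 ⟨he, h⟩)
    omega
  have hrdis : ∀ M ∈ P, ∀ N ∈ P, M ≠ N → Disjoint (r M) (r N) := by
    intro M hM N hN hMN
    rw [Finset.disjoint_left]
    intro e he he'
    exact Finset.disjoint_left.1 (h3 M hM N hN hMN) ((hr M e).1 he) ((hr N e).1 he')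
  have hrinj : Set.InjOn r P := by
    intro M hM N hN hMN
    by_contra hne
    have hd := hrdis M hM N hN hne
    rw [← hMN, disjoint_self] at hd
    have h0 := hrc M hM
    rw [hd] at h0
    have := fr_pos hne'
    simp at h0
    omega
  have q1 : ∀ M ∈ P.image r, IsMatchingFinset (G.induce c.supp) M ∧
      M.card = matchingNumber (G.induce c.supp) := by
    intro M hM
    obtain ⟨M', hM', rfl⟩ := Finset.mem_image.1 hM
    exact ⟨hrm M' hM', hrc M' hM'⟩
  have q2 : ∀ e, e ∈ (G.induce c.supp).edgeSet ↔ ∃ M ∈ P.image r, e ∈ M := by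
    intro e
    rw [fr_edge, h2]
    simp only [Finset.exists_mem_image, hr]
  have q3 : ∀ M ∈ P.image r, ∀ N ∈ P.image r, M ≠ N → Disjoint M N := by
    intro M hM N hN hMN
    obtain ⟨M', hM', rfl⟩ := Finset.mem_image.1 hM
    obtain ⟨N', hN', rfl⟩ := Finset.mem_image.1 hN
    exact hrdis M' hM' N' hN' (fun h => hMN (by rw [h]))
  refine ⟨⟨P.image r, q1, ?_, q3⟩, ?_⟩
  · intro e
    rw [SimpleGraph.mem_edgeFinset]
    exact q2 e
  · rw [fr_chrom hne' _ q1 q2 q3, fr_chrom hneG P h1 h2 h3, Finset.card_image_of_injOn hrinj]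
end
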